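/- arXiv:1107.0871 — 7 statements merged into one kernel-verified Lean document; each statement's English description precedes it below -/
import Mathlib

section
/- For every proper k-colouring σ of G and every colour q ≠ σ(v), the q-switching H(σ,q) is again a proper k-colouring of G. -/
/-- The disagreement graph `Q_{σ(v),q}`: the set of vertices `x` for which there is a
path `v = w₀, …, w_t = x` in `G` all of whose vertices receive colour `σ v` or `q`. -/
def disagreeSet {V : Type*} {k : ℕ} (G : SimpleGraph V) (v : V)
    (σ : V → Fin k) (q : Fin k) : Set V :=
  {x | ∃ p : G.Walk v x, ∀ w ∈ p.support, σ w = σ v ∨ σ w = q}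

open Classical in
/-- The `q`-switching `H(σ,q)`: exchange the colours `σ v` and `q` on the disagreement
graph, leaving all other vertices unchanged. -/
noncomputable def switchColour {V : Type*} {k : ℕ} (G : SimpleGraph V) (v : V)
    (σ : V → Fin k) (q : Fin k) : V → Fin k := fun x =>
  if x ∈ disagreeSet G v σ q then
    if σ x = σ v then q else if σ x = q then σ v else σ x
  else σ x

/- The switching recolours the disagreement graph `Q` by the injection `swap (σ v) q`, so an edge
inside `Q` stays proper, and an edge outside `Q` is untouched. If `x ∈ Q` and `y ∉ Q` are adjacent,
then `σ y` is neither `σ v` nor `q`, as otherwise a path to `x` would extend to `y`; so the swap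
fixes `σ y`, and the edge behaves as if both its endpoints had been recoloured. -/

theorem piecewise_comp_ne_of_adj {V α : Type*} {G : SimpleGraph V} {σ : V → α}
    (hσ : ∀ x y, G.Adj x y → σ x ≠ σ y) {f : α → α} (hf : f.Injective)
    {S : Set V} [∀ x, Decidable (x ∈ S)]
    (hS : ∀ x ∈ S, ∀ y ∉ S, G.Adj x y → f (σ y) = σ y) {x y : V} (hxy : G.Adj x y) :
    S.piecewise (f ∘ σ) σ x ≠ S.piecewise (f ∘ σ) σ y := by
  have hne : f (σ x) ≠ f (σ y) := hf.ne (hσ x y hxy)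
  by_cases hx : x ∈ S <;> by_cases hy : y ∈ S
  · simpa [hx, hy] using hne
  · simpa [hx, hy, hS x hx y hy hxy] using hne
  · simpa [hx, hy, hS y hy x hx hxy.symm] using hne
  · simpa [hx, hy] using hσ x y hxy

section Switching

variable {V : Type*} {k : ℕ} {G : SimpleGraph V} {v : V} {σ : V → Fin k} {q : Fin k}

theorem mem_disagreeSet_of_adj {x y : V} (hx : x ∈ disagreeSet G v σ q) (hxy : G.Adj x y)
    (hy : σ y = σ v ∨ σ y = q) : y ∈ disagreeSet G v σ q := by
  obtain ⟨p, hp⟩ := hx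
  refine ⟨p.concat hxy, fun w hw => ?_⟩
  rw [SimpleGraph.Walk.support_concat, List.mem_append, List.mem_singleton] at hw
  rcases hw with hw | rfl
  · exact hp w hw
  · exact hy

theorem swap_apply_eq_self_of_adj_disagreeSet {x y : V} (hx : x ∈ disagreeSet G v σ q)
    (hy : y ∉ disagreeSet G v σ q) (hxy : G.Adj x y) : Equiv.swap (σ v) q (σ y) = σ y :=
  Equiv.swap_apply_of_ne_of_ne
    (fun h => hy (mem_disagreeSet_of_adj hx hxy (.inl h)))
    (fun h => hy (mem_disagreeSet_of_adj hx hxy (.inr h)))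

open Classical in
theorem switchColour_eq_piecewise (G : SimpleGraph V) (v : V) (σ : V → Fin k) (q : Fin k) :
    switchColour G v σ q = (disagreeSet G v σ q).piecewise (Equiv.swap (σ v) q ∘ σ) σ :=
  rfl

end Switching

theorem stmt0_general {V : Type*} {k : ℕ} (G : SimpleGraph V) (v : V) (σ : V → Fin k)
    (hσ : ∀ x y, G.Adj x y → σ x ≠ σ y) (q : Fin k) :
    ∀ x y, G.Adj x y → switchColour G v σ q x ≠ switchColour G v σ q y := by
  classical
  intro x y hxy
  rw [switchColour_eq_piecewise]
  exact piecewise_comp_ne_of_adj hσ (Equiv.swap (σ v) q).injective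
    (fun _ hx _ hy => swap_apply_eq_self_of_adj_disagreeSet hx hy) hxy

/-- for every proper `k`-colouring `σ` of `G` and every colour `q ≠ σ v`,
the `q`-switching `H(σ,q)` is again a proper `k`-colouring of `G`. -/
theorem stmt0 {V : Type*} [Fintype V] {k : ℕ} (hk : 0 < k)
    (G : SimpleGraph V) (v : V) (σ : V → Fin k)
    (hσ : ∀ x y, G.Adj x y → σ x ≠ σ y) (q : Fin k) (hq : q ≠ σ v) :
    ∀ x y, G.Adj x y → switchColour G v σ q x ≠ switchColour G v σ q y :=
  stmt0_general G v σ hσ q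
end

section
/- For any two distinct colours c, q ∈ Fin k, the map σ ↦ H(σ,q) is a bijection from {σ ∈ Ω : σ(v) = c} onto {σ ∈ Ω : σ(v) = q}, and its inverse is the map σ ↦ H(σ,c). -/
/-!
The switching only exchanges two colours, so it changes neither which vertices have one of these
colours nor the component of `v` they span. Hence switching twice acts on one and the same
component and gives back the original colouring. Properness survives because no edge that leaves
the component ends in a vertex of either colour.
-/

section KempeSwitch

variable {V α : Type*} (G : SimpleGraph V) (v : V) (a b : α)

/-- The Kempe chain of `v`: the connected component of `v` in the subgraph spanned by the vertices
coloured `a` or `b`. It is empty when `σ v` is neither `a` nor `b`. -/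
def kempeChain (σ : V → α) : Set V :=
  {x | ∃ p : G.Walk v x, ∀ w ∈ p.support, σ w = a ∨ σ w = b}

open scoped Classical in
/-- The Kempe switch: the colouring obtained from `σ` by exchanging `a` and `b` on the Kempe chain
of `v`. The colours do not refer to `σ`, unlike those of `switchColour`, where `a = σ v`. -/
noncomputable def kempeSwitch [DecidableEq α] (σ : V → α) : V → α := fun x =>
  if x ∈ kempeChain G v a b σ then Equiv.swap a b (σ x) else σ x

variable {G v a b} {σ : V → α}

theorem self_mem_kempeChain (hv : σ v = a ∨ σ v = b) : v ∈ kempeChain G v a b σ :=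
  ⟨.nil, by simpa using hv⟩

theorem mem_kempeChain_of_adj {x y : V} (hx : x ∈ kempeChain G v a b σ) (hxy : G.Adj x y)
    (hy : σ y = a ∨ σ y = b) : y ∈ kempeChain G v a b σ := by
  obtain ⟨p, hp⟩ := hx
  refine ⟨p.concat hxy, fun w hw => ?_⟩
  rw [SimpleGraph.Walk.support_concat, List.mem_append, List.mem_singleton] at hw
  rcases hw with hw | rfl
  · exact hp w hw
  · exact hy

variable (G v a b σ) in
theorem kempeChain_comm : kempeChain G v a b σ = kempeChain G v b a σ := by
  simp only [kempeChain, or_comm]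

variable [DecidableEq α]

theorem kempeSwitch_of_mem {x : V} (hx : x ∈ kempeChain G v a b σ) :
    kempeSwitch G v a b σ x = Equiv.swap a b (σ x) :=
  if_pos hx

theorem kempeSwitch_of_notMem {x : V} (hx : x ∉ kempeChain G v a b σ) :
    kempeSwitch G v a b σ x = σ x :=
  if_neg hx

theorem kempeSwitch_self (hv : σ v = a) : kempeSwitch G v a b σ v = b := by
  rw [kempeSwitch_of_mem (self_mem_kempeChain (.inl hv)), hv, Equiv.swap_apply_left]

variable (G v a b σ) in
theorem kempeSwitch_comm : kempeSwitch G v a b σ = kempeSwitch G v b a σ := by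
  funext x
  have hchain : x ∈ kempeChain G v a b σ ↔ x ∈ kempeChain G v b a σ := by rw [kempeChain_comm]
  by_cases hx : x ∈ kempeChain G v a b σ
  · rw [kempeSwitch_of_mem hx, kempeSwitch_of_mem (hchain.mp hx), Equiv.swap_comm]
  · rw [kempeSwitch_of_notMem hx, kempeSwitch_of_notMem (mt hchain.mpr hx)]

theorem kempeSwitch_eq_or_eq_iff {x : V} :
    (kempeSwitch G v a b σ x = a ∨ kempeSwitch G v a b σ x = b) ↔ (σ x = a ∨ σ x = b) := by
  by_cases hx : x ∈ kempeChain G v a b σ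
  · rw [kempeSwitch_of_mem hx, Equiv.swap_apply_eq_iff, Equiv.swap_apply_eq_iff,
      Equiv.swap_apply_left, Equiv.swap_apply_right, or_comm]
  · rw [kempeSwitch_of_notMem hx]

theorem kempeChain_kempeSwitch :
    kempeChain G v a b (kempeSwitch G v a b σ) = kempeChain G v a b σ := by
  simp only [kempeChain, kempeSwitch_eq_or_eq_iff]

variable (G v a b) in
theorem kempeSwitch_involutive : Function.Involutive (kempeSwitch G v a b) := by
  intro σ
  funext x
  have hchain : x ∈ kempeChain G v a b (kempeSwitch G v a b σ) ↔ x ∈ kempeChain G v a b σ := by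
    rw [kempeChain_kempeSwitch]
  by_cases hx : x ∈ kempeChain G v a b σ
  · rw [kempeSwitch_of_mem (hchain.mpr hx), kempeSwitch_of_mem hx, Equiv.swap_apply_self]
  · rw [kempeSwitch_of_notMem (mt hchain.mp hx), kempeSwitch_of_notMem hx]

theorem kempeSwitch_ne_of_mem_of_notMem {x y : V} (hxy : G.Adj x y) (hne : σ x ≠ σ y)
    (hx : x ∈ kempeChain G v a b σ) (hy : y ∉ kempeChain G v a b σ) :
    kempeSwitch G v a b σ x ≠ kempeSwitch G v a b σ y := by
  have hσy : ¬(σ y = a ∨ σ y = b) := fun h => hy (mem_kempeChain_of_adj hx hxy h)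
  obtain ⟨hya, hyb⟩ := not_or.mp hσy
  rw [kempeSwitch_of_mem hx, kempeSwitch_of_notMem hy, ← Equiv.swap_apply_of_ne_of_ne hya hyb]
  exact (Equiv.swap a b).injective.ne hne

theorem kempeSwitch_ne_of_adj {x y : V} (hxy : G.Adj x y) (hne : σ x ≠ σ y) :
    kempeSwitch G v a b σ x ≠ kempeSwitch G v a b σ y := by
  by_cases hx : x ∈ kempeChain G v a b σ <;> by_cases hy : y ∈ kempeChain G v a b σ
  · rw [kempeSwitch_of_mem hx, kempeSwitch_of_mem hy]
    exact (Equiv.swap a b).injective.ne hne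
  · exact kempeSwitch_ne_of_mem_of_notMem hxy hne hx hy
  · exact (kempeSwitch_ne_of_mem_of_notMem hxy.symm hne.symm hy hx).symm
  · rwa [kempeSwitch_of_notMem hx, kempeSwitch_of_notMem hy]

variable (G v b) in
theorem mapsTo_kempeSwitch :
    Set.MapsTo (fun σ => kempeSwitch G v (σ v) b σ)
      {σ : V → α | ∀ x y, G.Adj x y → σ x ≠ σ y}
      {σ : V → α | (∀ x y, G.Adj x y → σ x ≠ σ y) ∧ σ v = b} :=
  fun _ hσ => ⟨fun x y hxy => kempeSwitch_ne_of_adj hxy (hσ x y hxy), kempeSwitch_self rfl⟩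

variable (G v a b) in
theorem leftInvOn_kempeSwitch :
    Set.LeftInvOn (fun σ => kempeSwitch G v (σ v) a σ) (fun σ => kempeSwitch G v (σ v) b σ)
      {σ : V → α | σ v = a} := by
  rintro σ rfl
  dsimp only
  rw [kempeSwitch_self rfl, kempeSwitch_comm, kempeSwitch_involutive]

end KempeSwitch

theorem stmt1_general {V α : Type*} [DecidableEq α] (G : SimpleGraph V) (v : V) (c q : α) :
    Set.BijOn (fun σ => kempeSwitch G v (σ v) q σ)
      {σ : V → α | (∀ x y, G.Adj x y → σ x ≠ σ y) ∧ σ v = c}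
      {σ : V → α | (∀ x y, G.Adj x y → σ x ≠ σ y) ∧ σ v = q} ∧
    Set.InvOn (fun σ => kempeSwitch G v (σ v) c σ) (fun σ => kempeSwitch G v (σ v) q σ)
      {σ : V → α | (∀ x y, G.Adj x y → σ x ≠ σ y) ∧ σ v = c}
      {σ : V → α | (∀ x y, G.Adj x y → σ x ≠ σ y) ∧ σ v = q} := by
  refine (and_iff_right_of_imp fun hinv => ?_).mpr ⟨?_, ?_⟩
  · exact hinv.bijOn ((mapsTo_kempeSwitch G v q).mono_left fun _ hσ => hσ.1)
      ((mapsTo_kempeSwitch G v c).mono_left fun _ hσ => hσ.1)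
  · exact (leftInvOn_kempeSwitch G v c q).mono fun _ hσ => hσ.2
  · exact (leftInvOn_kempeSwitch G v q c).mono fun _ hσ => hσ.2

theorem switchColour_eq_kempeSwitch {V : Type*} {k : ℕ} (G : SimpleGraph V) (v : V)
    (σ : V → Fin k) (q : Fin k) : switchColour G v σ q = kempeSwitch G v (σ v) q σ :=
  rfl

/-- for distinct colours `c q`, the map `σ ↦ H(σ,q)` is a bijection from
the proper `k`-colourings with `σ v = c` onto those with `σ v = q`, with inverse
`σ ↦ H(σ,c)`. -/
theorem stmt1 {V : Type*} [Fintype V] {k : ℕ} (hk : 0 < k)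
    (G : SimpleGraph V) (v : V) (c q : Fin k) (hcq : c ≠ q) :
    Set.BijOn (fun σ => switchColour G v σ q)
      {σ : V → Fin k | (∀ x y, G.Adj x y → σ x ≠ σ y) ∧ σ v = c}
      {σ : V → Fin k | (∀ x y, G.Adj x y → σ x ≠ σ y) ∧ σ v = q} ∧
    Set.InvOn (fun σ => switchColour G v σ c) (fun σ => switchColour G v σ q)
      {σ : V → Fin k | (∀ x y, G.Adj x y → σ x ≠ σ y) ∧ σ v = c}
      {σ : V → Fin k | (∀ x y, G.Adj x y → σ x ≠ σ y) ∧ σ v = q} := by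
  simpa only [switchColour_eq_kempeSwitch] using stmt1_general G v c q
end

section
/- If z is uniformly distributed on Ω₁ and ν' denotes the distribution of H(z) (as a distribution on S), and ν denotes the uniform distribution on Ω₂ (as a distribution on S), then ‖ν − ν'‖ ≤ α. -/
/-!
Let `N` be the larger of `|Ω₁|` and `|Ω₂|`. Each point of `Ω'₂` has mass at least `1 / N` under
both `ν` and `ν'`, so the two distributions share a common part of total mass at least
`|Ω'₂| / N ≥ 1 - α`, and they can differ on an event only by the mass outside this common part.
-/

open scoped ENNReal Finset

section CommonPart

variable {T : Type*} {p q : PMF T} {c : T → ℝ≥0∞}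

theorem toOuterMeasure_add_tsum_le_one_add (hp : ∀ x, c x ≤ p x) (hq : ∀ x, c x ≤ q x)
    (A : Set T) : p.toOuterMeasure A + ∑' x, c x ≤ 1 + q.toOuterMeasure A := by
  have pointwise (x : T) : A.indicator p x + c x ≤ p x + A.indicator q x := by
    by_cases hx : x ∈ A
    · simpa only [Set.indicator_of_mem hx] using add_le_add_right (hq x) (p x)
    · simpa only [Set.indicator_of_notMem hx, zero_add, add_zero] using hp x
  calc p.toOuterMeasure A + ∑' x, c x
      = ∑' x, (A.indicator p x + c x) := by rw [p.toOuterMeasure_apply, ENNReal.tsum_add]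
    _ ≤ ∑' x, (p x + A.indicator q x) := ENNReal.tsum_le_tsum pointwise
    _ = 1 + q.toOuterMeasure A := by rw [ENNReal.tsum_add, p.tsum_coe, q.toOuterMeasure_apply]

theorem toReal_toOuterMeasure_sub_le (hp : ∀ x, c x ≤ p x) (hq : ∀ x, c x ≤ q x) (A : Set T) :
    (p.toOuterMeasure A).toReal - (q.toOuterMeasure A).toReal ≤ 1 - (∑' x, c x).toReal := by
  have hc : ∑' x, c x ≠ ∞ := ne_top_of_le_ne_top p.tsum_coe_ne_top (ENNReal.tsum_le_tsum hp)
  have hpA : p.toOuterMeasure A ≠ ∞ := p.toOuterMeasure_apply A ▸ p.tsum_coe_indicator_ne_top A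
  have hqA : q.toOuterMeasure A ≠ ∞ := q.toOuterMeasure_apply A ▸ q.tsum_coe_indicator_ne_top A
  have h := ENNReal.toReal_mono (ENNReal.add_ne_top.2 ⟨ENNReal.one_ne_top, hqA⟩)
    (toOuterMeasure_add_tsum_le_one_add hp hq A)
  rw [ENNReal.toReal_add hpA hc, ENNReal.toReal_add ENNReal.one_ne_top hqA,
    ENNReal.toReal_one] at h
  linarith

theorem abs_toReal_toOuterMeasure_sub_le (hp : ∀ x, c x ≤ p x) (hq : ∀ x, c x ≤ q x)
    (A : Set T) :
    |(p.toOuterMeasure A).toReal - (q.toOuterMeasure A).toReal| ≤ 1 - (∑' x, c x).toReal :=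
  abs_sub_le_iff.2 ⟨toReal_toOuterMeasure_sub_le hp hq A, toReal_toOuterMeasure_sub_le hq hp A⟩

theorem abs_toReal_toOuterMeasure_sub_le_one_sub_card_mul {C : Finset T} {δ : ℝ≥0∞}
    (hp : ∀ x ∈ C, δ ≤ p x) (hq : ∀ x ∈ C, δ ≤ q x) (A : Set T) :
    |(p.toOuterMeasure A).toReal - (q.toOuterMeasure A).toReal| ≤ 1 - #C * δ.toReal := by
  have indicator_le {r : PMF T} (hr : ∀ x ∈ C, δ ≤ r x) :
      ∀ x, (C : Set T).indicator (fun _ ↦ δ) x ≤ r x :=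
    Set.indicator_le' hr fun _ _ ↦ zero_le
  have mass : ∑' x, (C : Set T).indicator (fun _ ↦ δ) x = #C * δ := by
    rw [← sum_eq_tsum_indicator, Finset.sum_const, nsmul_eq_mul]
  simpa only [mass, ENNReal.toReal_mul, ENNReal.toReal_natCast] using
    abs_toReal_toOuterMeasure_sub_le (indicator_le hp) (indicator_le hq) A

end CommonPart

theorem pmf_apply_le_map_apply {S T : Type*} (p : PMF S) (f : S → T) (a : S) :
    p a ≤ p.map f (f a) := by
  classical
  rw [PMF.map_apply]
  simpa only [if_true] using ENNReal.le_tsum (f := fun x ↦ if f a = f x then p x else 0) a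

theorem inv_natCast_le_uniformOfFinset_apply {S : Type*} {Ω : Finset S} (hne : Ω.Nonempty) {N : ℕ}
    (hN : #Ω ≤ N) {x : S} (hx : x ∈ Ω) : (N : ℝ≥0∞)⁻¹ ≤ PMF.uniformOfFinset Ω hne x := by
  rw [PMF.uniformOfFinset_apply_of_mem hne hx]
  exact ENNReal.inv_le_inv.2 (Nat.cast_le.2 hN)

theorem toReal_toOuterMeasure_coe_finset {S : Type*} (p : PMF S) (A : Finset S) :
    (p.toOuterMeasure A).toReal = ∑ a ∈ A, (p a).toReal := by
  rw [p.toOuterMeasure_apply_finset, ENNReal.toReal_sum fun a _ ↦ p.apply_ne_top a]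

theorem stmt4_general {S T : Type*} {Ω₁ Ω₁' : Finset S} {Ω₂ Ω₂' : Finset T}
    (hsub₁ : Ω₁' ⊆ Ω₁) (hsub₂ : Ω₂' ⊆ Ω₂) (hne₁ : Ω₁.Nonempty) (hne₂ : Ω₂.Nonempty) {α : ℝ}
    (hcard₁ : (1 - α) * #Ω₁ ≤ #Ω₁') (hcard₂ : (1 - α) * #Ω₂ ≤ #Ω₂')
    {H : S → T} (hH : Set.BijOn H Ω₁' Ω₂') (A : Set T) :
    |((PMF.uniformOfFinset Ω₂ hne₂).toOuterMeasure A).toReal -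
      (((PMF.uniformOfFinset Ω₁ hne₁).map H).toOuterMeasure A).toReal| ≤ α := by
  set N := max #Ω₁ #Ω₂ with hN
  have hν : ∀ y ∈ Ω₂', (N : ℝ≥0∞)⁻¹ ≤ PMF.uniformOfFinset Ω₂ hne₂ y := fun y hy ↦
    inv_natCast_le_uniformOfFinset_apply hne₂ (le_max_right _ _) (hsub₂ hy)
  have hν' : ∀ y ∈ Ω₂', (N : ℝ≥0∞)⁻¹ ≤ (PMF.uniformOfFinset Ω₁ hne₁).map H y := by
    intro y hy
    obtain ⟨x, hx, rfl⟩ := hH.surjOn hy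
    exact (inv_natCast_le_uniformOfFinset_apply hne₁ (le_max_left _ _) (hsub₁ hx)).trans
      (pmf_apply_le_map_apply _ H x)
  have card_eq : #Ω₁' = #Ω₂' := Finset.card_nbij H hH.mapsTo hH.injOn hH.surjOn
  have hNpos : (0 : ℝ) < N := Nat.cast_pos.2 (lt_max_of_lt_left hne₁.card_pos)
  have common_mass : 1 - α ≤ #Ω₂' * (N : ℝ)⁻¹ := by
    rw [← div_eq_mul_inv, le_div_iff₀ hNpos]
    rcases max_choice #Ω₁ #Ω₂ with h | h
    · rwa [hN, h, ← card_eq]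
    · rwa [hN, h]
  have h := abs_toReal_toOuterMeasure_sub_le_one_sub_card_mul hν hν' A
  rw [ENNReal.toReal_inv, ENNReal.toReal_natCast] at h
  linarith

/-- if `Ω'₁ ⊆ Ω₁` and `Ω'₂ ⊆ Ω₂` satisfy `|Ω'ᵢ| ≥ (1−α)|Ωᵢ|` and
`H` restricts to a bijection from `Ω'₁` onto `Ω'₂`, then the distribution `ν'` of
`H(z)` for `z` uniform on `Ω₁` is within total variation distance `α` of the uniform
distribution `ν` on `Ω₂`: for every event `A ⊆ S`, `|ν(A) − ν'(A)| ≤ α`. -/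
theorem stmt4 {S : Type*} [Fintype S]
    (Ω₁ Ω₂ Ω₁' Ω₂' : Finset S) (hsub₁ : Ω₁' ⊆ Ω₁) (hsub₂ : Ω₂' ⊆ Ω₂)
    (hne₁ : Ω₁.Nonempty) (hne₂ : Ω₂.Nonempty)
    (α : ℝ) (hα₀ : 0 ≤ α) (hα₁ : α ≤ 1)
    (hcard₁ : (1 - α) * (Ω₁.card : ℝ) ≤ (Ω₁'.card : ℝ))
    (hcard₂ : (1 - α) * (Ω₂.card : ℝ) ≤ (Ω₂'.card : ℝ))
    (H : S → S) (hH : Set.BijOn H (↑Ω₁' : Set S) (↑Ω₂' : Set S)) :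
    ∀ A : Finset S,
      |(∑ a ∈ A, ((PMF.uniformOfFinset Ω₂ hne₂) a).toReal) -
        (∑ a ∈ A, ((PMF.map H (PMF.uniformOfFinset Ω₁ hne₁)) a).toReal)| ≤ α := by
  intro A
  simpa only [toReal_toOuterMeasure_coe_finset] using
    stmt4_general hsub₁ hsub₂ hne₁ hne₂ hcard₁ hcard₂ hH (A : Set S)
end

section
/- Fix a colour c ∈ Fin k with {σ ∈ Ω : σ(v) = c} nonempty, and suppose k ≥ 2. Let x₁ = v, x₂, …, x_l be the vertices of a simple path in G and suppose k > deg(x_j) for j = 2, …, l, where deg denotes the degree in G. If σ is chosen uniformly at random from {σ ∈ Ω : σ(v) = c} and q is chosen uniformly at random from Fin k \ {c}, independently of σ, then the probability that σ(x_j) ∈ {c, q} for all j = 2, …, l is at most ∏_{j=2}^{l} 1/(k − deg(x_j)). -/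
/-!
Condition on `q`. Suppose that `S ∪ {v}` is coloured with `c` and `q` only, and let `u` lie outside
`S ∪ {v}` but next to one of its vertices `w`. Given the colours away from `u`, at most one colour
at `u` puts `u` into the disagreement graph as well: the element of `{c, q}` other than the colour
of `w`. On the other hand at least `k - deg u` colours are admissible at `u`. Hence adding `u` costs
a factor `1 / (k - deg u)`. Along a path, each vertex takes the role of `u` in turn, with its
predecessor as `w`.
-/

theorem ncard_setOf_snd_mem_fst_mem_le {β γ : Type*} [Finite β] (T : Finset γ) (N : γ → Set β) :
    {p : β × γ | p.2 ∈ T ∧ p.1 ∈ N p.2}.ncard ≤ ∑ q ∈ T, (N q).ncard := by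
  have eq_biUnion : {p : β × γ | p.2 ∈ T ∧ p.1 ∈ N p.2} = ⋃ q ∈ T, (·, q) '' N q := by
    ext ⟨b, q⟩
    simp [and_comm]
  rw [eq_biUnion]
  exact (T.set_ncard_biUnion_le _).trans (Finset.sum_le_sum fun q _ ↦ Set.ncard_image_le)

section DisagreementColorings

variable {V α : Type*} {G : SimpleGraph V}

variable (G) in
/-- The proper colourings of `G` with colours in `α`, encoded as plain functions rather than as
`G.Coloring α` so that they can be recoloured at a vertex with `Function.update`. -/
def properColorings (α : Type*) : Set (V → α) :=
  {σ | ∀ a b, G.Adj a b → σ a ≠ σ b}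

variable (G) in
/-- The proper colourings of `G` giving `v` the colour `c` for which all of `S` lies in the
disagreement graph `Q_{c,q}`. -/
def disagreementColorings (v : V) (c q : α) (S : Set V) : Set (V → α) :=
  {σ | σ ∈ properColorings G α ∧ σ v = c ∧ ∀ u ∈ S, σ u = c ∨ σ u = q}

variable {v u w : V} {c q a : α} {S : Set V} {σ τ : V → α}

theorem update_mem_properColorings [DecidableEq V] (hσ : σ ∈ properColorings G α)
    (ha : ∀ y, G.Adj u y → σ y ≠ a) : Function.update σ u a ∈ properColorings G α := by
  intro y z hyz
  rcases eq_or_ne y u with rfl | hy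
  · rw [Function.update_self, Function.update_of_ne hyz.ne']
    exact (ha z hyz).symm
  · rcases eq_or_ne z u with rfl | hz
    · rw [Function.update_self, Function.update_of_ne hy]
      exact ha y hyz.symm
    · rw [Function.update_of_ne hy, Function.update_of_ne hz]
      exact hσ y z hyz

theorem update_mem_disagreementColorings [DecidableEq V]
    (hσ : σ ∈ disagreementColorings G v c q S) (hu : u ∉ insert v S)
    (ha : ∀ y, G.Adj u y → σ y ≠ a) :
    Function.update σ u a ∈ disagreementColorings G v c q S := by
  obtain ⟨hproper, hv, hS⟩ := hσ
  have update_eq : ∀ y ∈ insert v S, Function.update σ u a y = σ y := fun y hy ↦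
    Function.update_of_ne (ne_of_mem_of_not_mem hy hu) _ _
  refine ⟨update_mem_properColorings hproper ha, ?_, fun y hy ↦ ?_⟩
  · rw [update_eq v (Set.mem_insert v S), hv]
  · rw [update_eq y (Set.mem_insert_of_mem v hy)]
    exact hS y hy

theorem card_sub_degree_le_ncard_eqOn_compl [Finite V] [Fintype α]
    [Fintype (G.neighborSet u)] (hσ : σ ∈ disagreementColorings G v c q S)
    (hu : u ∉ insert v S) :
    Fintype.card α - G.degree u ≤
      {τ ∈ disagreementColorings G v c q S | Set.EqOn σ τ {u}ᶜ}.ncard := by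
  classical
  let blocked : Finset α := (G.neighborFinset u).image σ
  have card_blocked : blocked.card ≤ G.degree u := Finset.card_image_le
  calc Fintype.card α - G.degree u ≤ blockedᶜ.card := by
        rw [Finset.card_compl]
        exact Nat.sub_le_sub_left card_blocked _
    _ = (↑blockedᶜ : Set α).ncard := (Set.ncard_coe_finset _).symm
    _ ≤ _ := by
      refine Set.ncard_le_ncard_of_injOn (Function.update σ u) (fun a ha ↦ ⟨?_, fun y hy ↦ ?_⟩)
        (Function.update_injective σ u).injOn
      · refine update_mem_disagreementColorings hσ hu fun y hy hya ↦ ?_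
        refine Finset.mem_compl.1 (Finset.mem_coe.1 ha) (Finset.mem_image.2 ⟨y, ?_, hya⟩)
        exact (G.mem_neighborFinset u y).2 hy
      · exact (Function.update_of_ne hy _ _).symm

theorem eq_or_eq_of_mem_disagreementColorings (hσ : σ ∈ disagreementColorings G v c q S)
    (hw : w ∈ insert v S) : σ w = c ∨ σ w = q := by
  rcases hw with rfl | hw
  · exact Or.inl hσ.2.1
  · exact hσ.2.2 w hw

theorem eq_of_mem_disagreementColorings_of_eqOn_compl (hσ : σ ∈ disagreementColorings G v c q S)
    (hτ : τ ∈ disagreementColorings G v c q S) (hu : u ∈ insert v S) (hw : w ∈ insert v S)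
    (hwu : G.Adj w u) (h : Set.EqOn σ τ {u}ᶜ) : σ = τ := by
  have eq_at_w : σ w = τ w := h hwu.ne
  have σ_ne : σ w ≠ σ u := hσ.1 w u hwu
  have τ_ne : σ w ≠ τ u := eq_at_w ▸ hτ.1 w u hwu
  have eq_at_u : σ u = τ u := by
    have σ_w := eq_or_eq_of_mem_disagreementColorings hσ hw
    have σ_u := eq_or_eq_of_mem_disagreementColorings hσ hu
    have τ_u := eq_or_eq_of_mem_disagreementColorings hτ hu
    grind
  funext y
  rcases eq_or_ne y u with rfl | hy
  · exact eq_at_u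
  · exact h hy

theorem ncard_disagreementColorings_insert_mul_le [Finite V] [Fintype α]
    [Fintype (G.neighborSet u)] (hu : u ∉ insert v S) (hw : w ∈ insert v S) (hwu : G.Adj w u) :
    (disagreementColorings G v c q (insert u S)).ncard * (Fintype.card α - G.degree u) ≤
      (disagreementColorings G v c q S).ncard := by
  classical
  have := Fintype.ofFinite V
  set A := disagreementColorings G v c q (insert u S)
  set B := disagreementColorings G v c q S
  have A_subset_B : A ⊆ B := fun σ hσ ↦ ⟨hσ.1, hσ.2.1, fun y hy ↦ hσ.2.2 y (Or.inr hy)⟩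
  let agree : (V → α) → (V → α) → Prop := fun σ τ ↦ Set.EqOn σ τ {u}ᶜ
  have many_above : ∀ σ ∈ A.toFinset,
      Fintype.card α - G.degree u ≤ (B.toFinset.bipartiteAbove agree σ).card := by
    intro σ hσ
    rw [← Set.ncard_coe_finset, Finset.coe_bipartiteAbove]
    simp only [Set.mem_toFinset]
    exact card_sub_degree_le_ncard_eqOn_compl (A_subset_B (Set.mem_toFinset.1 hσ)) hu
  have one_below : ∀ τ ∈ B.toFinset, (A.toFinset.bipartiteBelow agree τ).card ≤ 1 := by
    refine fun τ _ ↦ Finset.card_le_one.2 fun σ hσ ρ hρ ↦ ?_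
    obtain ⟨σ_mem, hστ⟩ := (Finset.mem_bipartiteBelow _).1 hσ
    obtain ⟨ρ_mem, hρτ⟩ := (Finset.mem_bipartiteBelow _).1 hρ
    exact eq_of_mem_disagreementColorings_of_eqOn_compl (Set.mem_toFinset.1 σ_mem)
      (Set.mem_toFinset.1 ρ_mem) (Or.inr (Set.mem_insert u S))
      (Set.insert_subset_insert (Set.subset_insert u S) hw) hwu (hστ.trans hρτ.symm)
  simpa only [← Set.ncard_eq_toFinset_card', mul_one] using
    Finset.card_mul_le_card_mul agree many_above one_below

variable [Finite V] [Fintype α] [G.LocallyFinite] {x : ℕ → V} {l : ℕ}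

theorem ncard_disagreementColorings_mul_prod_le (c q : α) (hinj : Set.InjOn x (Set.Icc 1 l))
    (hadj : ∀ j ∈ Set.Ico 1 l, ∃ i ∈ Set.Icc 1 j, G.Adj (x i) (x (j + 1))) :
    (disagreementColorings G (x 1) c q (x '' Set.Icc 2 l)).ncard *
        ∏ j ∈ Finset.Icc 2 l, (Fintype.card α - G.degree (x j)) ≤
      {σ ∈ properColorings G α | σ (x 1) = c}.ncard := by
  induction l with
  | zero => simp [disagreementColorings]
  | succ m ih =>
    obtain rfl | hm := m.eq_zero_or_pos
    · simp [disagreementColorings]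
    have ih := ih (hinj.mono (Set.Icc_subset_Icc_right m.le_succ))
      fun j hj ↦ hadj j (Set.Ico_subset_Ico_right m.le_succ hj)
    have insert_image : insert (x 1) (x '' Set.Icc 2 m) = x '' Set.Icc 1 m := by
      rw [← Set.image_insert_eq]
      exact congrArg (x '' ·) (Set.insert_Icc_add_one_left_eq_Icc hm)
    have image_succ : x '' Set.Icc 2 (m + 1) = insert (x (m + 1)) (x '' Set.Icc 2 m) := by
      rw [← Set.image_insert_eq, Set.insert_Icc_right_eq_Icc_add_one (by lia)]
    have new_vertex : x (m + 1) ∉ insert (x 1) (x '' Set.Icc 2 m) := by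
      rw [insert_image]
      rintro ⟨i, hi, hxi⟩
      have : i = m + 1 := hinj ⟨hi.1, hi.2.trans m.le_succ⟩ ⟨by lia, le_rfl⟩ hxi
      exact absurd hi.2 (by lia)
    obtain ⟨i, hi, hadj_i⟩ := hadj m ⟨hm, m.lt_succ_self⟩
    have old_neighbor : x i ∈ insert (x 1) (x '' Set.Icc 2 m) :=
      insert_image ▸ Set.mem_image_of_mem x hi
    rw [Finset.prod_Icc_succ_top (by lia), mul_left_comm, mul_comm, image_succ]
    refine le_trans ?_ ih
    gcongr
    exact ncard_disagreementColorings_insert_mul_le new_vertex old_neighbor hadj_i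

theorem ncard_setOf_mem_disagreementColorings_mul_prod_le (c : α)
    (hinj : Set.InjOn x (Set.Icc 1 l))
    (hadj : ∀ j ∈ Set.Ico 1 l, ∃ i ∈ Set.Icc 1 j, G.Adj (x i) (x (j + 1))) :
    {p : (V → α) × α | p.2 ≠ c ∧
        p.1 ∈ disagreementColorings G (x 1) c p.2 (x '' Set.Icc 2 l)}.ncard *
        ∏ j ∈ Finset.Icc 2 l, (Fintype.card α - G.degree (x j)) ≤
      {σ ∈ properColorings G α | σ (x 1) = c}.ncard * (Fintype.card α - 1) := by
  classical
  let N : α → Set (V → α) := fun q ↦ disagreementColorings G (x 1) c q (x '' Set.Icc 2 l)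
  have ncard_le_sum := ncard_setOf_snd_mem_fst_mem_le {c}ᶜ N
  simp only [Finset.mem_compl, Finset.mem_singleton] at ncard_le_sum
  calc _ ≤ (∑ q ∈ {c}ᶜ, (N q).ncard) * ∏ j ∈ Finset.Icc 2 l, (Fintype.card α - G.degree (x j)) :=
        Nat.mul_le_mul_right _ ncard_le_sum
    _ ≤ ∑ _ ∈ ({c}ᶜ : Finset α), {σ ∈ properColorings G α | σ (x 1) = c}.ncard := by
        rw [Finset.sum_mul]
        exact Finset.sum_le_sum fun q _ ↦ ncard_disagreementColorings_mul_prod_le c q hinj hadj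
    _ = _ := by
        rw [Finset.sum_const, Finset.card_compl, Finset.card_singleton, smul_eq_mul, mul_comm]

theorem stmt8_general [Nontrivial α] (v : V) (c : α) (hx1 : x 1 = v)
    (hinj : Set.InjOn x (Set.Icc 1 l))
    (hadj : ∀ j ∈ Set.Ico 1 l, ∃ i ∈ Set.Icc 1 j, G.Adj (x i) (x (j + 1)))
    (hdeg : ∀ j ∈ Set.Icc 2 l, G.degree (x j) < Fintype.card α)
    (hne : {σ ∈ properColorings G α | σ v = c}.Nonempty) :
    ({p : (V → α) × α | p.2 ≠ c ∧
        p.1 ∈ disagreementColorings G v c p.2 (x '' Set.Icc 2 l)}.ncard : ℝ) /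
      ({σ ∈ properColorings G α | σ v = c}.ncard * ((Fintype.card α : ℝ) - 1)) ≤
    ∏ j ∈ Finset.Icc 2 l, 1 / ((Fintype.card α : ℝ) - G.degree (x j)) := by
  subst hx1
  have one_lt_card : (1 : ℝ) < Fintype.card α := by exact_mod_cast Fintype.one_lt_card
  have ncard_pos : (0 : ℝ) < {σ ∈ properColorings G α | σ (x 1) = c}.ncard := by
    exact_mod_cast hne.ncard_pos
  have degree_lt : ∀ j ∈ Finset.Icc 2 l, G.degree (x j) < Fintype.card α := fun j hj ↦
    hdeg j (Finset.mem_Icc.1 hj)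
  have prod_pos : 0 < ∏ j ∈ Finset.Icc 2 l, ((Fintype.card α : ℝ) - G.degree (x j)) :=
    Finset.prod_pos fun j hj ↦ sub_pos.2 (by exact_mod_cast degree_lt j hj)
  have cast_prod : ((∏ j ∈ Finset.Icc 2 l, (Fintype.card α - G.degree (x j)) : ℕ) : ℝ) =
      ∏ j ∈ Finset.Icc 2 l, ((Fintype.card α : ℝ) - G.degree (x j)) := by
    rw [Nat.cast_prod]
    exact Finset.prod_congr rfl fun j hj ↦ Nat.cast_sub (degree_lt j hj).le
  rw [Finset.prod_div_distrib, Finset.prod_const_one,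
    div_le_div_iff₀ (mul_pos ncard_pos (sub_pos.2 one_lt_card)) prod_pos, one_mul, ← cast_prod,
    ← Nat.cast_pred Fintype.card_pos]
  exact_mod_cast ncard_setOf_mem_disagreementColorings_mul_prod_le c hinj hadj

end DisagreementColorings

/-- let `x 1 = v, x 2, …, x l` be the vertices of a simple path in `G` with
`k > deg (x j)` for `j = 2, …, l`. If `σ` is uniform on the proper `k`-colourings with
`σ v = c` and `q` is uniform on `Fin k \ {c}`, independently, then the probability that
`σ (x j) ∈ {c, q}` for all `j = 2, …, l` is at most `∏_{j=2}^{l} 1/(k − deg (x j))`.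
The probability is expressed by counting pairs `(σ, q)`. -/
theorem stmt8 {V : Type*} [Fintype V] [DecidableEq V] {k : ℕ} (hk : 2 ≤ k)
    (G : SimpleGraph V) [DecidableRel G.Adj] (v : V) (c : Fin k)
    (l : ℕ) (hl : 1 ≤ l) (x : ℕ → V) (hx1 : x 1 = v)
    (hinj : ∀ i j, 1 ≤ i → i ≤ l → 1 ≤ j → j ≤ l → x i = x j → i = j)
    (hadj : ∀ j, 1 ≤ j → j < l → G.Adj (x j) (x (j + 1)))
    (hdeg : ∀ j, 2 ≤ j → j ≤ l → G.degree (x j) < k)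
    (hne : {σ : V → Fin k | (∀ a b, G.Adj a b → σ a ≠ σ b) ∧ σ v = c}.Nonempty) :
    (({p : (V → Fin k) × Fin k |
        (∀ a b, G.Adj a b → p.1 a ≠ p.1 b) ∧ p.1 v = c ∧ p.2 ≠ c ∧
          ∀ j, 2 ≤ j → j ≤ l → p.1 (x j) = c ∨ p.1 (x j) = p.2}).ncard : ℝ) /
      ((({σ : V → Fin k | (∀ a b, G.Adj a b → σ a ≠ σ b) ∧ σ v = c}).ncard : ℝ) *
        ((k : ℝ) - 1)) ≤
    ∏ j ∈ Finset.Icc 2 l, (1 : ℝ) / ((k : ℝ) - (G.degree (x j) : ℝ)) := by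
  have : Nontrivial (Fin k) := Fin.nontrivial_iff_two_le.2 hk
  have general := stmt8_general v c hx1 (fun i hi j hj ↦ hinj i j hi.1 hi.2 hj.1 hj.2)
    (fun j hj ↦ ⟨j, ⟨hj.1, le_rfl⟩, hadj j hj.1 hj.2⟩) (by simpa using hdeg) hne
  simpa [disagreementColorings, properColorings, and_left_comm, -Set.mem_image,
    Set.forall_mem_image] using general
end

section
/- For every fixed ε > 0 there exists d₀(ε) such that for every real d > d₀(ε), every integer k ≥ (2+ε)d, and all sufficiently large n: ∑_{j=0}^{k−1} (1/(k−j)) · C(n,j) (d/n)^j (1 − d/n)^{n−j} + ∑_{j=k}^{n} C(n,j) (d/n)^j (1 − d/n)^{n−j} ≤ 1/((1+ε/4)d). Equivalently, if B is a binomial random variable with parameters n and d/n, then E[ 1/(k−B) · 1_{B < k} ] + Pr[B ≥ k] ≤ 1/((1+ε/4)d). -/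
/-!
With `B` distributed as `Bin(n, d/n)`, the left-hand side is the expectation of the capped
reciprocal `1 / max(1, k - B)`. The cap makes it at most `1`, and it is at most `1 / s` unless
`k - B < s`. Put `a = 1 + ε/4` and `b = 2 + ε`. For `k ≥ b d` and `s = a' d` with
`a < a' < b - 1`, the latter forces `B > r d` with `r = b - a' > 1`, which by Chernoff's bound has
probability at most `exp (-(r log r + 1 - r) d)`.
For large `d` this exponential is smaller than the gap between `1 / (a' d)` and `1 / (a d)`.
-/

open Filter InformationTheory MeasureTheory ProbabilityTheory Real Set
open scoped Topology unitInterval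

section Chernoff

variable (n : ℕ) (p : I)

lemma mgf_binomial (t : ℝ) :
    mgf (Nat.cast : ℕ → ℝ) Bin(n, p) t = (p * exp t + (1 - p)) ^ n := by
  rw [mgf, integral_binomial, add_pow, ← Nat.range_succ_eq_Iic]
  refine Finset.sum_congr rfl fun j _ ↦ ?_
  rw [smul_eq_mul, mul_pow, ← exp_nat_mul, mul_comm t]
  ring

lemma mgf_binomial_le_exp (t : ℝ) :
    mgf (Nat.cast : ℕ → ℝ) Bin(n, p) t ≤ exp (n * p * (exp t - 1)) := by
  have base_nonneg : 0 ≤ p * exp t + (1 - p) :=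
    add_nonneg (mul_nonneg p.2.1 (exp_pos t).le) (sub_nonneg.2 p.2.2)
  have base_le : p * exp t + (1 - p) ≤ exp (p * (exp t - 1)) := by
    linarith [add_one_le_exp (p * (exp t - 1))]
  calc mgf (Nat.cast : ℕ → ℝ) Bin(n, p) t
      = (p * exp t + (1 - p)) ^ n := mgf_binomial n p t
    _ ≤ exp (p * (exp t - 1)) ^ n := pow_le_pow_left₀ base_nonneg base_le n
    _ = exp (n * p * (exp t - 1)) := by rw [← exp_nat_mul, mul_assoc]

lemma binomial_real_ge_le_exp_neg_klFun {r : ℝ} (hr : 1 ≤ r) :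
    Bin(n, p).real {j : ℕ | r * (n * p) ≤ j} ≤ exp (-(n * p * klFun r)) := by
  calc Bin(n, p).real {j : ℕ | r * (n * p) ≤ j}
      ≤ exp (-log r * (r * (n * p))) * mgf (Nat.cast : ℕ → ℝ) Bin(n, p) (log r) :=
        measure_ge_le_exp_mul_mgf _ (log_nonneg hr) (integrable_binomial _)
    _ ≤ exp (-log r * (r * (n * p))) * exp (n * p * (exp (log r) - 1)) := by
        gcongr
        exact mgf_binomial_le_exp n p (log r)
    _ = exp (-(n * p * klFun r)) := by
        rw [← exp_add, exp_log (by positivity), klFun_apply]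
        ring_nf

end Chernoff

lemma integral_le_add_measureReal {Ω : Type*} [MeasurableSpace Ω] {μ : Measure Ω}
    [IsProbabilityMeasure μ] {f : Ω → ℝ} {s : Set Ω} {c : ℝ} (hf : Integrable f μ)
    (hs : MeasurableSet s) (hc : 0 ≤ c) (hf_one : ∀ x ∈ s, f x ≤ 1) (hfc : ∀ x ∉ s, f x ≤ c) :
    ∫ x, f x ∂μ ≤ c + μ.real s := by
  have indicator_integrable : Integrable (s.indicator 1 : Ω → ℝ) μ :=
    (integrable_const 1).indicator hs
  calc ∫ x, f x ∂μ
      ≤ ∫ x, c + s.indicator 1 x ∂μ := by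
        refine integral_mono hf ((integrable_const c).add indicator_integrable) fun x ↦ ?_
        by_cases hx : x ∈ s
        · simpa [hx] using (hf_one x hx).trans (le_add_of_nonneg_left hc)
        · simpa [hx] using hfc x hx
    _ = c + μ.real s := by
        rw [integral_add (integrable_const c) indicator_integrable, integral_indicator_one hs]
        simp

lemma inv_max_one_natCast_sub (k j : ℕ) :
    (max 1 ((k : ℝ) - j))⁻¹ = if j < k then 1 / ((k : ℝ) - j) else 1 := by
  split_ifs with hjk
  · have : (j : ℝ) + 1 ≤ k := mod_cast hjk
    rw [max_eq_right (by linarith), one_div]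
  · have : (k : ℝ) ≤ j := mod_cast not_lt.1 hjk
    rw [max_eq_left (by linarith), inv_one]

lemma integral_inv_max_one_natCast_sub_binomial (n k : ℕ) (p : I) :
    ∫ j, (max 1 ((k : ℝ) - j))⁻¹ ∂Bin(n, p) =
      ∑ j ∈ Finset.range k, 1 / ((k : ℝ) - j) * n.choose j * (p : ℝ) ^ j * (1 - p) ^ (n - j) +
        ∑ j ∈ Finset.Icc k n, n.choose j * (p : ℝ) ^ j * (1 - p) ^ (n - j) := by
  have filter_lt : ∑ j ∈ Finset.Iic n with j < k,
        1 / ((k : ℝ) - j) * n.choose j * (p : ℝ) ^ j * (1 - p) ^ (n - j) =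
      ∑ j ∈ Finset.range k, 1 / ((k : ℝ) - j) * n.choose j * (p : ℝ) ^ j * (1 - p) ^ (n - j) := by
    refine Finset.sum_subset (fun j hj ↦ by simp_all) fun j hjk hjn ↦ ?_
    have : n < j := by simp_all
    simp [Nat.choose_eq_zero_of_lt this]
  have filter_ge : {j ∈ Finset.Iic n | ¬j < k} = Finset.Icc k n := by
    ext j
    simp [and_comm]
  rw [integral_binomial, ← filter_lt, ← filter_ge, Finset.sum_filter, Finset.sum_filter,
    ← Finset.sum_add_distrib]
  refine Finset.sum_congr rfl fun j _ ↦ ?_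
  rw [inv_max_one_natCast_sub, smul_eq_mul]
  split_ifs <;> ring

lemma integral_inv_max_one_sub_binomial_le (n : ℕ) (p : I) {r s x : ℝ} (hr : 1 ≤ r) (hs : 0 < s)
    (hx : s + r * (n * p) ≤ x) :
    ∫ j, (max 1 (x - j))⁻¹ ∂Bin(n, p) ≤ s⁻¹ + exp (-(n * p * klFun r)) := by
  have le_off_tail : ∀ j ∉ {j : ℕ | r * (n * p) ≤ j}, (max 1 (x - j))⁻¹ ≤ s⁻¹ := fun j hj ↦ by
    have hj : (j : ℝ) < r * (n * p) := not_le.1 hj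
    exact inv_anti₀ hs (le_max_of_le_right (by linarith))
  calc ∫ j, (max 1 (x - j))⁻¹ ∂Bin(n, p)
      ≤ s⁻¹ + Bin(n, p).real {j : ℕ | r * (n * p) ≤ j} :=
        integral_le_add_measureReal (integrable_binomial _) .of_discrete (inv_nonneg.2 hs.le)
          (fun j _ ↦ inv_le_one_of_one_le₀ (le_max_left ..)) le_off_tail
    _ ≤ s⁻¹ + exp (-(n * p * klFun r)) := by
        gcongr
        exact binomial_real_ge_le_exp_neg_klFun n p hr

lemma eventually_inv_mul_add_exp_neg_mul_le {a b c : ℝ} (ha : 0 < a) (hab : a < b) (hc : 0 < c) :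
    ∀ᶠ x in atTop, (b * x)⁻¹ + exp (-(x * c)) ≤ (a * x)⁻¹ := by
  have decay : Tendsto (fun x ↦ x * exp (-(x * c))) atTop (𝓝 0) := by
    simpa [mul_comm c] using tendsto_rpow_mul_exp_neg_mul_atTop_nhds_zero 1 c hc
  have gap_pos : 0 < a⁻¹ - b⁻¹ := sub_pos.2 (inv_strictAnti₀ ha hab)
  filter_upwards [decay.eventually_le_const gap_pos, eventually_gt_atTop 0] with x hx x_pos
  calc (b * x)⁻¹ + exp (-(x * c)) = (b⁻¹ + x * exp (-(x * c))) / x := by field_simp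
    _ ≤ a⁻¹ / x := by gcongr; linarith
    _ = (a * x)⁻¹ := by rw [mul_inv, div_eq_mul_inv]

theorem stmt12_general {a b : ℝ} (ha : 0 < a) (hab : a + 1 < b) :
    ∃ d₀ : ℝ, ∀ d : ℝ, d₀ < d → ∀ k : ℕ, b * d ≤ (k : ℝ) → ∀ n : ℕ, d ≤ n →
      (∑ j ∈ Finset.range k, (1 / ((k : ℝ) - (j : ℝ))) * (n.choose j : ℝ) *
          (d / n) ^ j * (1 - d / n) ^ (n - j)) +
        (∑ j ∈ Finset.Icc k n, (n.choose j : ℝ) * (d / n) ^ j * (1 - d / n) ^ (n - j))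
      ≤ 1 / (a * d) := by
  obtain ⟨a', haa', ha'b⟩ : ∃ a', a < a' ∧ a' < b - 1 := exists_between (by linarith)
  have one_lt : 1 < b - a' := by linarith
  have klFun_pos : 0 < klFun (b - a') := (klFun_nonneg (by linarith)).lt_of_ne'
    (mt (klFun_eq_zero_iff (by linarith)).1 one_lt.ne')
  obtain ⟨d₀, hd₀⟩ := eventually_atTop.1 <|
    (eventually_inv_mul_add_exp_neg_mul_le ha haa' klFun_pos).and (eventually_gt_atTop 0)
  refine ⟨d₀, fun d hd k hk n hdn ↦ ?_⟩
  obtain ⟨asymptotic_le, d_pos⟩ := hd₀ d hd.le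
  have n_pos : (0 : ℝ) < n := d_pos.trans_le hdn
  let p : I := ⟨d / n, unitInterval.div_mem d_pos.le n_pos.le hdn⟩
  have mean_eq : n * (p : ℝ) = d := mul_div_cancel₀ d n_pos.ne'
  have expectation_le := integral_inv_max_one_sub_binomial_le n p one_lt.le
    (mul_pos (ha.trans haa') d_pos) (x := k) (by rw [mean_eq]; linarith)
  rw [integral_inv_max_one_natCast_sub_binomial, mean_eq] at expectation_le
  exact (expectation_le.trans asymptotic_le).trans_eq (one_div _).symm

/-- for every `ε > 0` there is `d₀(ε)` such that for every `d > d₀(ε)`,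
every integer `k ≥ (2+ε)d` and all large `n`:
`∑_{j=0}^{k−1} (1/(k−j))·C(n,j)(d/n)^j(1−d/n)^{n−j}
  + ∑_{j=k}^{n} C(n,j)(d/n)^j(1−d/n)^{n−j} ≤ 1/((1+ε/4)d)`. -/
theorem stmt12 (ε : ℝ) (hε : 0 < ε) :
    ∃ d₀ : ℝ, ∀ d : ℝ, d₀ < d → ∀ k : ℕ, (2 + ε) * d ≤ (k : ℝ) →
      ∃ n₀ : ℕ, ∀ n : ℕ, n₀ ≤ n →
        (∑ j ∈ Finset.range k, (1 / ((k : ℝ) - (j : ℝ))) * (n.choose j : ℝ) *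
            (d / n) ^ j * (1 - d / n) ^ (n - j)) +
          (∑ j ∈ Finset.Icc k n, (n.choose j : ℝ) * (d / n) ^ j * (1 - d / n) ^ (n - j))
        ≤ 1 / ((1 + ε / 4) * d) := by
  obtain ⟨d₀, hd₀⟩ := stmt12_general (a := 1 + ε / 4) (b := 2 + ε) (by linarith) (by linarith)
  exact ⟨d₀, fun d hd k hk ↦ ⟨⌈d⌉₊, fun n hn ↦ hd₀ d hd k hk n (Nat.ceil_le.1 hn)⟩⟩
end

section
/- Suppose k ≥ 2 and the set of good k-colourings of G is nonempty, and let Z be chosen uniformly at random from the good k-colourings. Then for every colour c with Pr[Z(u) = c] > 0 and all colours q, q' ∈ Fin k \ {c}: Pr[Z(v) = q | Z(u) = c] = Pr[Z(v) = q' | Z(u) = c] = 1/(k−1). Moreover, if the set of bad k-colourings of G is nonempty and X is uniform over Ω, then Pr[X(v) = X(u) = c | X is bad] = 1/k for every colour c. -/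
/-!
Permuting the colours maps proper colourings to proper colourings. A permutation `π` that preserves
a set `F` of colourings matches the colourings in `F` with `σ v = q` to those with `σ v = π q`. The
good colourings with `σ u = c` are preserved by every `π` fixing `c`, and such `π` act transitively
on the `k - 1` colours other than `c`; the bad colourings are preserved by every `π`, and all `π`
act transitively on the `k` colours. In both cases the colour of `v` is therefore uniform on the
colours it can take.
-/

open MulAction
open scoped Pointwise

theorem ncard_eq_card_mul_of_ncard_inter_preimage_eq {X Y : Type*} {S : Set X}
    (hS : S.Finite) {f : X → Y} {T : Finset Y} (hf : Set.MapsTo f S T) {n : ℕ}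
    (hn : ∀ t ∈ T, (S ∩ f ⁻¹' {t}).ncard = n) : S.ncard = T.card * n := by
  classical
  lift S to Finset X using hS
  have hfiber : ∀ t ∈ T, (S.filter (f · = t)).card = n := fun t ht ↦ by
    rw [← hn t ht, ← Set.ncard_coe_finset, Finset.coe_filter]
    rfl
  rw [Set.ncard_coe_finset, Finset.card_eq_sum_card_fiberwise hf, Finset.sum_congr rfl hfiber,
    Finset.sum_const, smul_eq_mul]

section EquivariantMap

variable {Γ X Y : Type*} [Group Γ] [MulAction Γ X] [MulAction Γ Y] {S : Set X}

theorem ncard_inter_preimage_smul {g : Γ} (hg : g ∈ stabilizer Γ S) {f : X → Y}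
    (hf : ∀ (h : Γ) x, f (h • x) = h • f x) (y : Y) :
    (S ∩ f ⁻¹' {g • y}).ncard = (S ∩ f ⁻¹' {y}).ncard := by
  have hpreimage : f ⁻¹' {g • y} = g • f ⁻¹' {y} := by
    rw [← Set.smul_set_singleton]
    exact Group.preimage_smul_set (⟨f, hf⟩ : X →[Γ] Y) g {y}
  calc (S ∩ f ⁻¹' {g • y}).ncard
      = (g • S ∩ g • f ⁻¹' {y}).ncard := by rw [mem_stabilizer_iff.mp hg, hpreimage]
    _ = (S ∩ f ⁻¹' {y}).ncard := by rw [← Set.smul_set_inter, Set.ncard_smul_set]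

theorem ncard_inter_preimage_div_ncard_of_transitive {𝕜 : Type*} [DivisionRing 𝕜] [CharZero 𝕜]
    (hfin : S.Finite) (hne : S.Nonempty) {f : X → Y}
    (hf : ∀ (g : Γ) x, f (g • x) = g • f x) {T : Finset Y} (hT : Set.MapsTo f S T)
    {y : Y} (htrans : ∀ t ∈ T, ∃ g ∈ stabilizer Γ S, g • y = t) :
    ((S ∩ f ⁻¹' {y}).ncard : 𝕜) / (S.ncard : 𝕜) = 1 / (T.card : 𝕜) := by
  have hcard : S.ncard = T.card * (S ∩ f ⁻¹' {y}).ncard := by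
    refine ncard_eq_card_mul_of_ncard_inter_preimage_eq hfin hT fun t ht ↦ ?_
    obtain ⟨g, hg, rfl⟩ := htrans t ht
    exact ncard_inter_preimage_smul hg hf y
  have hfiber : ((S ∩ f ⁻¹' {y}).ncard : 𝕜) ≠ 0 := by
    have hpos := (Set.ncard_pos hfin).mpr hne
    exact Nat.cast_ne_zero.mpr (Nat.pos_of_mul_pos_left (hcard ▸ hpos)).ne'
  rw [hcard, Nat.cast_mul, div_mul_cancel_right₀ hfiber, one_div]

end EquivariantMap

section PermutationInvariantFamily

variable {V α : Type*} {S : Set (V → α)} {v u : V}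

theorem isFixedBlock_setOf_apply_eq_apply (hS : IsFixedBlock (Equiv.Perm α) S) :
    IsFixedBlock (Equiv.Perm α) {σ | σ ∈ S ∧ σ v = σ u} := fun π ↦
  mem_stabilizer_set.mpr fun σ ↦
    and_congr (mem_stabilizer_set.mp (hS π) σ) π.apply_eq_iff_eq

theorem isFixedBlock_setOf_apply_ne_apply (hS : IsFixedBlock (Equiv.Perm α) S) :
    IsFixedBlock (Equiv.Perm α) {σ | σ ∈ S ∧ σ v ≠ σ u} := fun π ↦
  mem_stabilizer_set.mpr fun σ ↦
    and_congr (mem_stabilizer_set.mp (hS π) σ) π.apply_eq_iff_eq.not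

theorem mem_stabilizer_setOf_apply_eq (hS : IsFixedBlock (Equiv.Perm α) S) {π : Equiv.Perm α}
    {c : α} (hc : π c = c) : π ∈ stabilizer (Equiv.Perm α) {σ | σ ∈ S ∧ σ u = c} :=
  mem_stabilizer_set.mpr fun σ ↦ by
    have hcolour : π (σ u) = c ↔ σ u = c := by
      rw [← π.apply_eq_iff_eq (x := σ u), hc]
    exact and_congr (mem_stabilizer_set.mp (hS π) σ) hcolour

variable [Fintype α] {𝕜 : Type*} [DivisionRing 𝕜] [CharZero 𝕜]

theorem uniform_apply_of_apply_ne (hS : IsFixedBlock (Equiv.Perm α) S) (hfin : S.Finite)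
    {c q : α} (hne : {σ | (σ ∈ S ∧ σ v ≠ σ u) ∧ σ u = c}.Nonempty) (hq : q ≠ c) :
    ({σ | (σ ∈ S ∧ σ v ≠ σ u) ∧ σ v = q ∧ σ u = c}.ncard : 𝕜) /
        ({σ | (σ ∈ S ∧ σ v ≠ σ u) ∧ σ u = c}.ncard : 𝕜) =
      1 / ((Fintype.card α : 𝕜) - 1) := by
  classical
  set F : Set (V → α) := {σ | (σ ∈ S ∧ σ v ≠ σ u) ∧ σ u = c}
  have hfiber : {σ | (σ ∈ S ∧ σ v ≠ σ u) ∧ σ v = q ∧ σ u = c} = F ∩ (fun σ ↦ σ v) ⁻¹' {q} :=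
    Set.ext fun σ ↦ by
      simp only [F, Set.mem_inter_iff, Set.mem_ofPred_eq, Set.mem_preimage, Set.mem_singleton_iff]
      tauto
  have hmaps : Set.MapsTo (fun σ : V → α ↦ σ v) F (Finset.univ.erase c) := by
    rintro σ ⟨⟨-, hvu⟩, rfl⟩
    simpa using hvu
  have htrans : ∀ t ∈ Finset.univ.erase c, ∃ π ∈ stabilizer (Equiv.Perm α) F, π • q = t :=
    fun t ht ↦ ⟨Equiv.swap q t,
      mem_stabilizer_setOf_apply_eq (isFixedBlock_setOf_apply_ne_apply hS)
        (Equiv.swap_apply_of_ne_of_ne hq.symm (Finset.ne_of_mem_erase ht).symm),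
      Equiv.swap_apply_left q t⟩
  calc ({σ | (σ ∈ S ∧ σ v ≠ σ u) ∧ σ v = q ∧ σ u = c}.ncard : 𝕜) / (F.ncard : 𝕜)
      = ((F ∩ (fun σ ↦ σ v) ⁻¹' {q}).ncard : 𝕜) / (F.ncard : 𝕜) := by rw [hfiber]
    _ = 1 / ((Finset.univ.erase c).card : 𝕜) :=
      ncard_inter_preimage_div_ncard_of_transitive (hfin.subset fun σ hσ ↦ hσ.1.1) hne
        (fun _ _ ↦ rfl) hmaps htrans
    _ = 1 / ((Fintype.card α : 𝕜) - 1) := by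
      rw [Finset.cast_card_erase_of_mem (Finset.mem_univ c), Finset.card_univ]

theorem uniform_apply_of_apply_eq (hS : IsFixedBlock (Equiv.Perm α) S) (hfin : S.Finite)
    (hne : {σ | σ ∈ S ∧ σ v = σ u}.Nonempty) (c : α) :
    ({σ | σ ∈ S ∧ σ v = c ∧ σ u = c}.ncard : 𝕜) / ({σ | σ ∈ S ∧ σ v = σ u}.ncard : 𝕜) =
      1 / (Fintype.card α : 𝕜) := by
  classical
  set F : Set (V → α) := {σ | σ ∈ S ∧ σ v = σ u}
  have hfiber : {σ | σ ∈ S ∧ σ v = c ∧ σ u = c} = F ∩ (fun σ ↦ σ v) ⁻¹' {c} :=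
    Set.ext fun σ ↦ by
      simp only [F, Set.mem_inter_iff, Set.mem_ofPred_eq, Set.mem_preimage,
        Set.mem_singleton_iff]
      grind
  have hmaps : Set.MapsTo (fun σ : V → α ↦ σ v) F (Finset.univ : Finset α) :=
    fun σ _ ↦ Finset.mem_coe.mpr (Finset.mem_univ (σ v))
  have htrans : ∀ t ∈ Finset.univ, ∃ π ∈ stabilizer (Equiv.Perm α) F, π • c = t :=
    fun t _ ↦ ⟨Equiv.swap c t, isFixedBlock_setOf_apply_eq_apply hS _, Equiv.swap_apply_left c t⟩
  rw [hfiber, ← Finset.card_univ]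
  exact ncard_inter_preimage_div_ncard_of_transitive (hfin.subset fun σ hσ ↦ hσ.1) hne
    (fun _ _ ↦ rfl) hmaps htrans

theorem stmt14_general (hS : IsFixedBlock (Equiv.Perm α) S) (hfin : S.Finite) (v u : V) :
    (∀ c : α, {σ | (σ ∈ S ∧ σ v ≠ σ u) ∧ σ u = c}.Nonempty → ∀ q : α, q ≠ c →
      ({σ | (σ ∈ S ∧ σ v ≠ σ u) ∧ σ v = q ∧ σ u = c}.ncard : 𝕜) /
          ({σ | (σ ∈ S ∧ σ v ≠ σ u) ∧ σ u = c}.ncard : 𝕜) =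
        1 / ((Fintype.card α : 𝕜) - 1)) ∧
    ({σ | σ ∈ S ∧ σ v = σ u}.Nonempty → ∀ c : α,
      ({σ | σ ∈ S ∧ σ v = c ∧ σ u = c}.ncard : 𝕜) / ({σ | σ ∈ S ∧ σ v = σ u}.ncard : 𝕜) =
        1 / (Fintype.card α : 𝕜)) :=
  ⟨fun _ hne _ hq ↦ uniform_apply_of_apply_ne hS hfin hne hq,
    fun hne c ↦ uniform_apply_of_apply_eq hS hfin hne c⟩

end PermutationInvariantFamily

theorem isFixedBlock_properColorings {V α : Type*} (G : SimpleGraph V) :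
    IsFixedBlock (Equiv.Perm α) {σ : V → α | ∀ x y, G.Adj x y → σ x ≠ σ y} := fun π ↦
  mem_stabilizer_set.mpr fun _ ↦
    forall₃_congr fun _ _ _ ↦ π.apply_eq_iff_eq.not

/-- for `Z` uniform over the nonempty set of good `k`-colourings of `G`
(those proper colourings with `σ v ≠ σ u`), for every colour `c` with
`Pr[Z(u) = c] > 0` and all colours `q, q' ≠ c`,
`Pr[Z(v) = q | Z(u) = c] = Pr[Z(v) = q' | Z(u) = c] = 1/(k−1)`; moreover, if the set of
bad colourings (`σ v = σ u`) is nonempty and `X` is uniform over `Ω`, then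
`Pr[X(v) = X(u) = c | X is bad] = 1/k` for every colour `c`. Conditional probabilities
are expressed as ratios of cardinalities. -/
theorem stmt14 {V : Type*} [Fintype V] {k : ℕ} (hk : 2 ≤ k)
    (G : SimpleGraph V) (v u : V) (huv : u ≠ v) (hadj : ¬ G.Adj v u)
    (hgood : {σ : V → Fin k | (∀ x y, G.Adj x y → σ x ≠ σ y) ∧ σ v ≠ σ u}.Nonempty) :
    (∀ c : Fin k,
      {σ : V → Fin k | ((∀ x y, G.Adj x y → σ x ≠ σ y) ∧ σ v ≠ σ u) ∧
        σ u = c}.Nonempty →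
      ∀ q q' : Fin k, q ≠ c → q' ≠ c →
        (({σ : V → Fin k | ((∀ x y, G.Adj x y → σ x ≠ σ y) ∧ σ v ≠ σ u) ∧
            σ v = q ∧ σ u = c}).ncard : ℝ) /
          (({σ : V → Fin k | ((∀ x y, G.Adj x y → σ x ≠ σ y) ∧ σ v ≠ σ u) ∧
            σ u = c}).ncard : ℝ) = 1 / ((k : ℝ) - 1) ∧
        (({σ : V → Fin k | ((∀ x y, G.Adj x y → σ x ≠ σ y) ∧ σ v ≠ σ u) ∧
            σ v = q' ∧ σ u = c}).ncard : ℝ) /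
          (({σ : V → Fin k | ((∀ x y, G.Adj x y → σ x ≠ σ y) ∧ σ v ≠ σ u) ∧
            σ u = c}).ncard : ℝ) = 1 / ((k : ℝ) - 1)) ∧
    ({σ : V → Fin k | (∀ x y, G.Adj x y → σ x ≠ σ y) ∧ σ v = σ u}.Nonempty →
      ∀ c : Fin k,
        (({σ : V → Fin k | (∀ x y, G.Adj x y → σ x ≠ σ y) ∧ σ v = c ∧
            σ u = c}).ncard : ℝ) /
          (({σ : V → Fin k | (∀ x y, G.Adj x y → σ x ≠ σ y) ∧
            σ v = σ u}).ncard : ℝ) = 1 / (k : ℝ)) := by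
  have h := stmt14_general (𝕜 := ℝ) (isFixedBlock_properColorings (α := Fin k) G)
    (Set.toFinite _) v u
  rw [Fintype.card_fin] at h
  exact ⟨fun c hc q q' hq hq' ↦ ⟨h.1 c hc q hq, h.1 c hc q' hq'⟩, h.2⟩
end

section
/- Suppose k ≥ 2 and Ω is nonempty. Let X be chosen uniformly at random from Ω and let Y be the (random) output of STEP on input X. Then for every colour c ∈ Fin k and every colour q ∈ Fin k \ {c}: Pr[Y(v) = q and X(u) = c] = Pr[X(u) = c]/(k−1). -/
open scoped ENNReal

/-- The set of proper `k`-colourings of `G`, as a finset. -/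
noncomputable def colourings {V : Type*} [Fintype V] (G : SimpleGraph V) (k : ℕ) :
    Finset (V → Fin k) :=
  (Set.toFinite {σ : V → Fin k | ∀ x y, G.Adj x y → σ x ≠ σ y}).toFinset

/-- The randomized procedure STEP: on a good colouring output it unchanged; on a bad
colouring pick `q` uniformly at random from `Fin k \ {σ v}` and output `H(σ,q)`. -/
noncomputable def stepPMF {V : Type*} {k : ℕ} (hk : 2 ≤ k) (G : SimpleGraph V)
    (v u : V) (σ : V → Fin k) : PMF (V → Fin k) :=
  if σ v = σ u then
    PMF.map (fun q => switchColour G v σ q)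
      (PMF.uniformOfFinset (Finset.univ.erase (σ v))
        (by
          rw [← Finset.card_pos, Finset.card_erase_of_mem (Finset.mem_univ _),
            Finset.card_univ, Fintype.card_fin]
          omega))
  else PMF.pure σ

/-!
Condition on `X`. When `X u = c ≠ q`, the event `Y v = q` has probability `1 / (k - 1)` if
`X v = c`, since a switching with colour `r` gives `v` the colour `r`, and otherwise it is the event
`X v = q`. Hence `Pr[Y v = q, X u = c] = Pr[X u = c, X v = c] / (k - 1) + Pr[X u = c, X v = q]`.
The law of `X` is unchanged by permuting colours, so given `X u = c` all the values `X v ≠ c` are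
equally likely, and the last term is `Pr[X u = c, X v ≠ c] / (k - 1)`.
-/

section PMF

variable {α β : Type*}

theorem toOuterMeasure_bind_map_prodMk (μ : PMF α) (κ : α → PMF β) (s : Set α) (t : Set β) :
    (μ.bind fun a => (κ a).map fun b => (a, b)).toOuterMeasure {p | p.2 ∈ t ∧ p.1 ∈ s} =
      ∑' a, s.indicator (fun a => μ a * (κ a).toOuterMeasure t) a := by
  rw [PMF.toOuterMeasure_bind_apply]
  refine tsum_congr fun a => ?_
  rw [PMF.toOuterMeasure_map_apply]
  by_cases ha : a ∈ s <;> simp [ha]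

theorem toOuterMeasure_eq_sum_fiberwise [Fintype β] (μ : PMF α) (s : Set α) (f : α → β) :
    μ.toOuterMeasure s = ∑ b, μ.toOuterMeasure {a | a ∈ s ∧ f a = b} := by
  classical
  simp only [PMF.toOuterMeasure_apply]
  rw [← Summable.tsum_finsetSum fun _ _ => ENNReal.summable]
  refine tsum_congr fun a => ?_
  by_cases ha : a ∈ s <;> simp [Set.indicator_apply, ha]

theorem map_uniformOfFinset_perm (s : Finset α) (hs : s.Nonempty) (e : Equiv.Perm α)
    (he : ∀ a, e a ∈ s ↔ a ∈ s) :
    (PMF.uniformOfFinset s hs).map e = PMF.uniformOfFinset s hs := by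
  classical
  ext b
  rw [PMF.map_apply, tsum_eq_single (e.symm b)
    fun a ha => if_neg fun hb => ha (e.symm_apply_eq.mpr hb).symm]
  simp [PMF.uniformOfFinset_apply, ← he (e.symm b)]

end PMF

section ColourSymmetric

variable {V α : Type*}

/-- A random colouring, given by its law `μ`, is colour symmetric if permuting the colours does not
change its law. This is the only property of the uniform law on proper colourings that matters for
STEP. -/
def IsColourSymmetric (μ : PMF (V → α)) : Prop :=
  ∀ π : Equiv.Perm α, μ.map (fun σ => π ∘ σ) = μ

variable {μ : PMF (V → α)} {u v : V} {c q r : α}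

theorem IsColourSymmetric.toOuterMeasure_eq_of_ne_of_ne (hμ : IsColourSymmetric μ)
    (hq : q ≠ c) (hr : r ≠ c) :
    μ.toOuterMeasure {σ | σ u = c ∧ σ v = q} = μ.toOuterMeasure {σ | σ u = c ∧ σ v = r} := by
  classical
  have hpre : (fun σ : V → α => Equiv.swap q r ∘ σ) ⁻¹' {σ | σ u = c ∧ σ v = q} =
      {σ | σ u = c ∧ σ v = r} := by
    ext σ
    simp [Equiv.swap_apply_eq_iff, Equiv.swap_apply_of_ne_of_ne hq.symm hr.symm]
  rw [← hpre, ← PMF.toOuterMeasure_map_apply, hμ]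

theorem IsColourSymmetric.toOuterMeasure_eq_add_card_sub_one_mul [Fintype α]
    (hμ : IsColourSymmetric μ) (hq : q ≠ c) :
    μ.toOuterMeasure {σ | σ u = c} = μ.toOuterMeasure {σ | σ u = c ∧ σ v = c} +
      ((Fintype.card α : ℝ≥0∞) - 1) * μ.toOuterMeasure {σ | σ u = c ∧ σ v = q} := by
  classical
  rw [toOuterMeasure_eq_sum_fiberwise μ _ (fun σ => σ v),
    ← Finset.add_sum_erase _ _ (Finset.mem_univ c)]
  simp only [Set.mem_ofPred_eq]
  rw [Finset.sum_congr rfl fun r hr =>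
    hμ.toOuterMeasure_eq_of_ne_of_ne (Finset.ne_of_mem_erase hr) hq]
  simp

theorem isColourSymmetric_uniformOfFinset_colourings [Fintype V] {k : ℕ} (G : SimpleGraph V)
    (hΩ : (colourings G k).Nonempty) :
    IsColourSymmetric (PMF.uniformOfFinset (colourings G k) hΩ) := fun π =>
  map_uniformOfFinset_perm _ hΩ ((Equiv.refl V).arrowCongr π) fun σ => by simp [colourings]

end ColourSymmetric

section Step

variable {V : Type*} {k : ℕ} (G : SimpleGraph V) {v u : V} {σ : V → Fin k} {q : Fin k}

theorem switchColour_apply_self (v : V) (σ : V → Fin k) (q : Fin k) :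
    switchColour G v σ q v = q := by
  have hv : v ∈ disagreeSet G v σ q := ⟨.nil, by simp⟩
  simp [switchColour, hv]

theorem toOuterMeasure_stepPMF_of_bad (hk : 2 ≤ k) (hbad : σ v = σ u) (hq : q ≠ σ u) :
    (stepPMF hk G v u σ).toOuterMeasure {τ | τ v = q} = ((k : ℝ≥0∞) - 1)⁻¹ := by
  have hpre : (fun r => switchColour G v σ r) ⁻¹' {τ | τ v = q} = {q} := by
    ext r
    simp [switchColour_apply_self]
  rw [stepPMF, if_pos hbad, PMF.toOuterMeasure_map_apply, hpre, PMF.toOuterMeasure_apply_singleton,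
    PMF.uniformOfFinset_apply_of_mem _ (by simpa [hbad] using hq)]
  simp

theorem stepPMF_of_good (hk : 2 ≤ k) (hgood : σ v ≠ σ u) : stepPMF hk G v u σ = PMF.pure σ :=
  if_neg hgood

theorem toOuterMeasure_bind_stepPMF (hk : 2 ≤ k) (μ : PMF (V → Fin k)) {c : Fin k} (hq : q ≠ c) :
    (μ.bind fun σ => (stepPMF hk G v u σ).map fun τ => (σ, τ)).toOuterMeasure
        {p | p.2 v = q ∧ p.1 u = c} =
      μ.toOuterMeasure {σ | σ u = c ∧ σ v = c} / ((k : ℝ≥0∞) - 1) +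
        μ.toOuterMeasure {σ | σ u = c ∧ σ v = q} := by
  refine (toOuterMeasure_bind_map_prodMk μ (stepPMF hk G v u)
    {σ | σ u = c} {τ | τ v = q}).trans ?_
  rw [μ.toOuterMeasure_apply, μ.toOuterMeasure_apply, div_eq_mul_inv,
    ← ENNReal.tsum_mul_right, ← ENNReal.tsum_add]
  refine tsum_congr fun σ => ?_
  by_cases hu : σ u = c
  · subst hu
    by_cases hbad : σ v = σ u
    · simp [toOuterMeasure_stepPMF_of_bad G hk hbad hq, hbad, hq.symm]
    · simp [Set.indicator_apply, stepPMF_of_good G hk hbad, PMF.toOuterMeasure_pure_apply, hbad]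
  · simp [hu]

end Step

theorem stmt15_general {V : Type*} {k : ℕ} (hk : 2 ≤ k) (G : SimpleGraph V) (v u : V)
    {μ : PMF (V → Fin k)} (hμ : IsColourSymmetric μ) {c q : Fin k} (hqc : q ≠ c) :
    (μ.bind fun σ => (stepPMF hk G v u σ).map fun τ => (σ, τ)).toOuterMeasure
        {p | p.2 v = q ∧ p.1 u = c} =
      μ.toOuterMeasure {σ | σ u = c} / ((k : ℝ≥0∞) - 1) := by
  have hk_ne_zero : (k : ℝ≥0∞) - 1 ≠ 0 := (tsub_pos_of_lt (by exact_mod_cast hk)).ne'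
  have hk_ne_top : (k : ℝ≥0∞) - 1 ≠ ⊤ := ENNReal.sub_ne_top (ENNReal.natCast_ne_top k)
  have htotal := hμ.toOuterMeasure_eq_add_card_sub_one_mul (u := u) (v := v) hqc
  rw [Fintype.card_fin] at htotal
  rw [toOuterMeasure_bind_stepPMF G hk μ hqc, htotal, ENNReal.add_div,
    mul_comm ((k : ℝ≥0∞) - 1), ENNReal.mul_div_cancel_right hk_ne_zero hk_ne_top]

/-- if `k ≥ 2` and `Ω` is nonempty, `X` is uniform on `Ω` and `Y` is the
output of STEP on input `X`, then for every colour `c` and every colour `q ≠ c`,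
`Pr[Y(v) = q and X(u) = c] = Pr[X(u) = c]/(k−1)`. The joint law of `(X,Y)` is the
uniform law on `Ω` bound with STEP. -/
theorem stmt15 {V : Type*} [Fintype V] {k : ℕ} (hk : 2 ≤ k)
    (G : SimpleGraph V) (v u : V) (huv : u ≠ v) (hadj : ¬ G.Adj v u)
    (hΩ : (colourings G k).Nonempty) (c : Fin k) (q : Fin k) (hqc : q ≠ c) :
    ((PMF.uniformOfFinset (colourings G k) hΩ).bind
        (fun σ => PMF.map (fun τ => (σ, τ)) (stepPMF hk G v u σ))).toOuterMeasure
      {p : (V → Fin k) × (V → Fin k) | p.2 v = q ∧ p.1 u = c} =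
    (PMF.uniformOfFinset (colourings G k) hΩ).toOuterMeasure
      {σ : V → Fin k | σ u = c} / ((k : ℝ≥0∞) - 1) :=
  stmt15_general hk G v u (isColourSymmetric_uniformOfFinset_colourings G hΩ) hqc
end
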